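/- For every integer l > 1: a linear functional φ ∈ M₄(l)* satisfies PD(φ) = 0 if and only if φ vanishes identically on S₄(l); moreover the image of PD : M₄(l)* → M₄(l) is exactly S₄(l). In particular, the induced map S₄(l)* → S₄(l) is a linear isomorphism, i.e. the pairing on S₄(l) induced by PD is nondegenerate. -/

import Mathlib

open scoped BigOperators

namespace MW

variable (l : ℕ)

/-- Index type for the basis symbols: `0 ↦ x²`, `1 ↦ xy`, `2 ↦ y²`. -/
abbrev Sym := Fin 3 × ZMod l × ZMod l

/-- The free ℂ-vector space on the symbols. -/
abbrev V := Sym l →₀ ℂ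

/-- `gcd(u,v,l) = 1`. -/
def copr (u v : ZMod l) : Prop := Nat.gcd (Nat.gcd (ZMod.val u) (ZMod.val v)) l = 1

instance (u v : ZMod l) : Decidable (copr l u v) := by unfold copr; infer_instance

noncomputable def X2 (u v : ZMod l) : V l := Finsupp.single (0, u, v) 1
noncomputable def XY (u v : ZMod l) : V l := Finsupp.single (1, u, v) 1
noncomputable def Y2 (u v : ZMod l) : V l := Finsupp.single (2, u, v) 1

/-- The relation subspace: the relations of Merel–Shokurov on coprime symbols,
together with the (dummy) basis vectors at non-coprime indices. -/
noncomputable def Rel : Submodule ℂ (V l) :=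
  Submodule.span ℂ
    ({ w | ∃ u v, ¬ copr l u v ∧ (w = X2 l u v ∨ w = XY l u v ∨ w = Y2 l u v) } ∪
     { w | ∃ u v, copr l u v ∧
        (w = X2 l u v + Y2 l v (-u) ∨
         w = XY l u v - XY l v (-u) ∨
         w = Y2 l u v + X2 l v (-u) ∨
         w = XY l v (-u - v) - XY l (-u - v) u + Y2 l (-u - v) u + X2 l u v - XY l u v) })

/-- The space of weight four modular symbols of level `l`. -/
abbrev M := V l ⧸ Rel l

noncomputable def x2 (u v : ZMod l) : M l := Submodule.Quotient.mk (X2 l u v)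
noncomputable def xy (u v : ZMod l) : M l := Submodule.Quotient.mk (XY l u v)
noncomputable def y2 (u v : ZMod l) : M l := Submodule.Quotient.mk (Y2 l u v)

/-- The class of `p₂·x²(u,v) + p₁·xy(u,v) + p₀·y²(u,v)` in `M l`. -/
noncomputable def pcl (p2 p1 p0 : ℂ) (u v : ZMod l) : M l :=
  p2 • x2 l u v + p1 • xy l u v + p0 • y2 l u v

/-- Reduction `ZMod l → ZMod (gcd(a,l))`. -/
noncomputable def castg (a : ZMod l) : ZMod l →+* ZMod (Nat.gcd (ZMod.val a) l) :=
  ZMod.castHom (Nat.gcd_dvd_right (ZMod.val a) l) (ZMod (Nat.gcd (ZMod.val a) l))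

/-- The functional on `V l` attached to the cusp data `(a, b)`. -/
noncomputable def psiV (a : ZMod l) (b : ZMod (Nat.gcd (ZMod.val a) l)) : V l →ₗ[ℂ] ℂ :=
  Finsupp.lift ℂ ℂ (Sym l) fun p =>
    if copr l p.2.1 p.2.2 then
      (if p.1 = 0 then
        ((if p.2.1 = a ∧ castg l a p.2.2 = b then (1 : ℂ) else 0) +
         (if p.2.1 = -a ∧ castg l a p.2.2 = -b then (1 : ℂ) else 0))
       else if p.1 = 2 then
        (-(if p.2.2 = a ∧ castg l a p.2.1 = -b then (1 : ℂ) else 0) -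
          (if p.2.2 = -a ∧ castg l a p.2.1 = b then (1 : ℂ) else 0))
       else 0)
    else 0

/-- The cuspidal subspace `S₄(l) ⊆ M₄(l)`: the (image in `M l` of the) intersection
of the kernels of all the functionals `ψ_{(a,b)}`. -/
noncomputable def S : Submodule ℂ (M l) :=
  Submodule.map (Rel l).mkQ
    (⨅ (a : ZMod l), ⨅ (b : ZMod (Nat.gcd (ZMod.val a) l)), ⨅ (_ : IsUnit b),
      LinearMap.ker (psiV l a b))

/-- The Poincaré duality map (as a function on the dual space). -/
noncomputable def PD [NeZero l] (φ : Module.Dual ℂ (M l)) : M l :=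
  (24 : ℂ)⁻¹ • ∑ u : ZMod l, ∑ v : ZMod l,
    ( φ (pcl l 1 (-2) 1 (-v) (u + v) - pcl l 1 2 1 v (v - u)) • x2 l u v
      - (2 : ℂ) • φ (pcl l 0 (-1) 1 (-v) (u + v) + pcl l 0 1 1 v (v - u)) • xy l u v
      + φ (pcl l 0 0 1 (-v) (u + v) - pcl l 0 0 1 v (v - u)) • y2 l u v )

end MW

namespace MW

/-- Functions on pairs with values in coefficient triples. -/
abbrev E (l : ℕ) := ZMod l × ZMod l → ℂ × ℂ × ℂ

noncomputable def opS (l : ℕ) : E l →ₗ[ℂ] E l where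
  toFun e := fun z => ((e (-z.2, z.1)).2.2, -(e (-z.2, z.1)).2.1, (e (-z.2, z.1)).1)
  map_add' a b := by
    funext z; ext <;> simp <;> ring
  map_smul' c a := by
    funext z; ext <;> simp

noncomputable def opR (l : ℕ) : E l →ₗ[ℂ] E l where
  toFun e := fun z => ((e (-z.1 - z.2, z.1)).2.2,
    -(e (-z.1 - z.2, z.1)).2.1 - 2 * (e (-z.1 - z.2, z.1)).2.2,
    (e (-z.1 - z.2, z.1)).1 + (e (-z.1 - z.2, z.1)).2.1 + (e (-z.1 - z.2, z.1)).2.2)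
  map_add' a b := by
    funext z; ext <;> simp <;> ring
  map_smul' c a := by
    funext z; ext <;> simp <;> ring

noncomputable def opP (l : ℕ) : E l →ₗ[ℂ] E l where
  toFun e := fun z => if copr l z.1 z.2 then e z else 0
  map_add' a b := by
    funext z; by_cases h : copr l z.1 z.2 <;> simp [h]
  map_smul' c a := by
    funext z; by_cases h : copr l z.1 z.2 <;> simp [h]

lemma copr_iff (l : ℕ) [NeZero l] (u v : ZMod l) :
    copr l u v ↔ ∃ s t : ZMod l, s * u + t * v = 1 := by
  unfold copr
  constructor
  · intro h
    have h1 := Nat.gcd_eq_gcd_ab (Nat.gcd (ZMod.val u) (ZMod.val v)) l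
    have h2 := Nat.gcd_eq_gcd_ab (ZMod.val u) (ZMod.val v)
    rw [h, h2] at h1
    have h3 := congrArg (Int.cast : ℤ → ZMod l) h1
    push_cast at h3
    simp only [ZMod.natCast_val, ZMod.cast_id', id, CharP.cast_eq_zero, zero_mul, add_zero] at h3
    refine ⟨(Nat.gcdA u.val v.val : ZMod l) * (Nat.gcdA (u.val.gcd v.val) l : ZMod l),
      (Nat.gcdB u.val v.val : ZMod l) * (Nat.gcdA (u.val.gcd v.val) l : ZMod l), ?_⟩
    linear_combination -h3
  · rintro ⟨s, t, h⟩
    set d := Nat.gcd (Nat.gcd (ZMod.val u) (ZMod.val v)) l with hd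
    have hdl : d ∣ l := Nat.gcd_dvd_right _ _
    have hdu : d ∣ u.val := (Nat.gcd_dvd_left _ _).trans (Nat.gcd_dvd_left _ _)
    have hdv : d ∣ v.val := (Nat.gcd_dvd_left _ _).trans (Nat.gcd_dvd_right _ _)
    have h4 := congrArg (ZMod.castHom hdl (ZMod d)) h
    have hu : ZMod.castHom hdl (ZMod d) u = 0 := by
      rw [ZMod.castHom_apply, ZMod.cast_eq_val]; exact (ZMod.natCast_eq_zero_iff _ _).2 hdu
    have hv : ZMod.castHom hdl (ZMod d) v = 0 := by
      rw [ZMod.castHom_apply, ZMod.cast_eq_val]; exact (ZMod.natCast_eq_zero_iff _ _).2 hdv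
    rw [map_add, map_mul, map_mul, hu, hv, map_one, mul_zero, mul_zero, add_zero] at h4
    have h5 : ((1 : ℕ) : ZMod d) = 0 := by rw [Nat.cast_one]; exact h4.symm
    exact Nat.dvd_one.1 ((ZMod.natCast_eq_zero_iff _ _).1 h5)

lemma copr_S (l : ℕ) [NeZero l] (u v : ZMod l) : copr l (-v) u ↔ copr l u v := by
  rw [copr_iff, copr_iff]
  constructor
  · rintro ⟨s, t, h⟩; exact ⟨t, -s, by rw [← h]; ring⟩
  · rintro ⟨s, t, h⟩; exact ⟨-t, s, by rw [← h]; ring⟩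

lemma copr_S' (l : ℕ) [NeZero l] (u v : ZMod l) : copr l v (-u) ↔ copr l u v := by
  rw [← copr_S, neg_neg]

lemma copr_R (l : ℕ) [NeZero l] (u v : ZMod l) : copr l (-u - v) u ↔ copr l u v := by
  rw [copr_iff, copr_iff]
  constructor
  · rintro ⟨s, t, h⟩; exact ⟨t - s, -s, by rw [← h]; ring⟩
  · rintro ⟨s, t, h⟩; exact ⟨-t, s - t, by rw [← h]; ring⟩

lemma copr_R' (l : ℕ) [NeZero l] (u v : ZMod l) : copr l v (-u - v) ↔ copr l u v := by
  rw [← copr_R]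
  have : -v - (-u - v) = u := by ring
  rw [this]

lemma opS_apply (l : ℕ) (e : E l) (u v : ZMod l) :
    opS l e (u, v) = ((e (-v, u)).2.2, -(e (-v, u)).2.1, (e (-v, u)).1) := rfl

lemma opR_apply (l : ℕ) (e : E l) (u v : ZMod l) :
    opR l e (u, v) = ((e (-u - v, u)).2.2,
    -(e (-u - v, u)).2.1 - 2 * (e (-u - v, u)).2.2,
    (e (-u - v, u)).1 + (e (-u - v, u)).2.1 + (e (-u - v, u)).2.2) := rfl

lemma opP_apply (l : ℕ) (e : E l) (u v : ZMod l) :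
    opP l e (u, v) = if copr l u v then e (u, v) else 0 := rfl

lemma opSS (l : ℕ) (e : E l) (u v : ZMod l) : opS l (opS l e) (u, v) = e (-u, -v) := by
  simp [opS_apply]

lemma opS4 (l : ℕ) (e : E l) : opS l (opS l (opS l (opS l e))) = e := by
  funext ⟨u, v⟩
  rw [opSS, opSS]; simp

lemma opR2 (l : ℕ) (e : E l) (u v : ZMod l) : opR l (opR l e) (u, v) =
    ((e (v, -u - v)).1 + (e (v, -u - v)).2.1 + (e (v, -u - v)).2.2,
     - (e (v, -u - v)).2.1 - 2 * (e (v, -u - v)).1, (e (v, -u - v)).1) := by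
  have : -(-u - v) - u = v := by ring
  simp only [opR_apply, this]
  ext <;> simp <;> ring

lemma opR3 (l : ℕ) (e : E l) : opR l (opR l (opR l e)) = e := by
  funext ⟨u, v⟩
  have : -v - (-u - v) = u := by ring
  simp only [opR2, opR_apply, this]
  ext <;> simp <;> ring

lemma opSSR (l : ℕ) (e : E l) : opR l (opS l (opS l e)) = opS l (opS l (opR l e)) := by
  funext ⟨u, v⟩
  rw [opSS]
  simp only [opR_apply, opSS]
  have : -(-u - v) = - -u - -v := by ring
  rw [this]

lemma opPS (l : ℕ) [NeZero l] (e : E l) : opP l (opS l e) = opS l (opP l e) := by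
  funext ⟨u, v⟩
  simp only [opP_apply, opS_apply, copr_S]
  by_cases h : copr l u v
  · simp [h]
  · simp [h]; rfl

lemma opPR (l : ℕ) [NeZero l] (e : E l) : opP l (opR l e) = opR l (opP l e) := by
  funext ⟨u, v⟩
  simp only [opP_apply, opR_apply, copr_R]
  by_cases h : copr l u v
  · simp [h]
  · simp [h]; rfl

lemma opS_single (l : ℕ) (u v : ZMod l) (c : ℂ × ℂ × ℂ) :
    opS l (Pi.single (u, v) c) = Pi.single (v, -u) (c.2.2, -c.2.1, c.1) := by
  funext ⟨x, y⟩
  rw [opS_apply]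
  by_cases h : (x, y) = (v, -u)
  · obtain ⟨rfl, rfl⟩ := Prod.mk.inj h
    simp
  · have h' : (-y, x) ≠ (u, v) := by
      rintro h2; obtain ⟨rfl, rfl⟩ := Prod.mk.inj h2; simp at h
    rw [Pi.single_eq_of_ne h, Pi.single_eq_of_ne h']; simp

lemma opR_single (l : ℕ) (u v : ZMod l) (c : ℂ × ℂ × ℂ) :
    opR l (Pi.single (u, v) c) =
      Pi.single (v, -u - v) (c.2.2, -c.2.1 - 2 * c.2.2, c.1 + c.2.1 + c.2.2) := by
  funext ⟨x, y⟩
  rw [opR_apply]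
  by_cases h : (x, y) = (v, -u - v)
  · obtain ⟨rfl, rfl⟩ := Prod.mk.inj h
    have : -x - (-u - x) = u := by ring
    simp [this]
  · have h' : (-x - y, x) ≠ (u, v) := by
      rintro h2; obtain ⟨rfl, rfl⟩ := Prod.mk.inj h2; apply h; ext <;> simp
    rw [Pi.single_eq_of_ne h, Pi.single_eq_of_ne h']; simp

lemma opP_single (l : ℕ) (u v : ZMod l) (c : ℂ × ℂ × ℂ) (h : ¬ copr l u v) :
    opP l (Pi.single (u, v) c) = 0 := by
  funext ⟨x, y⟩
  rw [opP_apply]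
  by_cases h2 : (x, y) = (u, v)
  · obtain ⟨rfl, rfl⟩ := Prod.mk.inj h2
    simp [h]
  · rw [Pi.single_eq_of_ne h2]; simp

/-- The invariant pairing. -/
noncomputable def bet (l : ℕ) [NeZero l] : E l →ₗ[ℂ] E l →ₗ[ℂ] ℂ :=
  LinearMap.mk₂ ℂ (fun e f => ∑ z, ((e z).1 * (f z).2.2 + (e z).2.2 * (f z).1
      - (e z).2.1 * (f z).2.1 / 2))
    (by intro a b c; rw [← Finset.sum_add_distrib]; congr 1; funext z; simp; ring)
    (by intro a b c; rw [Finset.smul_sum]; congr 1; funext z; simp; ring)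
    (by intro a b c; rw [← Finset.sum_add_distrib]; congr 1; funext z; simp; ring)
    (by intro a b c; rw [Finset.smul_sum]; congr 1; funext z; simp; ring)

lemma bet_apply (l : ℕ) [NeZero l] (e f : E l) : bet l e f =
    ∑ z, ((e z).1 * (f z).2.2 + (e z).2.2 * (f z).1 - (e z).2.1 * (f z).2.1 / 2) := rfl

def eqS (l : ℕ) : ZMod l × ZMod l ≃ ZMod l × ZMod l where
  toFun z := (-z.2, z.1)
  invFun z := (z.2, -z.1)
  left_inv z := by simp
  right_inv z := by simp

def eqR (l : ℕ) : ZMod l × ZMod l ≃ ZMod l × ZMod l where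
  toFun z := (-z.1 - z.2, z.1)
  invFun z := (z.2, -z.1 - z.2)
  left_inv z := by ext <;> simp
  right_inv z := by ext <;> simp <;> ring

lemma bet_S (l : ℕ) [NeZero l] (e f : E l) : bet l (opS l e) (opS l f) = bet l e f := by
  rw [bet_apply, bet_apply]
  conv_rhs => rw [← Equiv.sum_comp (eqS l)]
  refine Finset.sum_congr rfl fun z _ => ?_
  obtain ⟨u, v⟩ := z
  simp only [opS_apply, eqS, Equiv.coe_fn_mk]
  ring

lemma bet_R (l : ℕ) [NeZero l] (e f : E l) : bet l (opR l e) (opR l f) = bet l e f := by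
  rw [bet_apply, bet_apply]
  conv_rhs => rw [← Equiv.sum_comp (eqR l)]
  refine Finset.sum_congr rfl fun z _ => ?_
  obtain ⟨u, v⟩ := z
  simp only [opR_apply, eqR, Equiv.coe_fn_mk]
  ring

lemma bet_symm (l : ℕ) [NeZero l] (e f : E l) : bet l e f = bet l f e := by
  rw [bet_apply, bet_apply]
  refine Finset.sum_congr rfl fun z _ => ?_
  ring

lemma bet_skew (l : ℕ) [NeZero l] (e f : E l) :
    bet l e (opR l (opR l f) - opR l f) = - bet l f (opR l (opR l e) - opR l e) := by
  have h1 : bet l e (opR l f) = bet l f (opR l (opR l e)) := by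
    rw [← bet_R, ← bet_R, opR3, bet_symm]
  have h2 : bet l e (opR l (opR l f)) = bet l f (opR l e) := by
    rw [← bet_R, opR3, bet_symm]
  rw [map_sub, map_sub, h1, h2]; ring

lemma bet_cusp (l : ℕ) [NeZero l] (g f : E l) (hg : opR l g = opS l g)
    (hS : opS l f = -f) (hR : f + opR l f + opR l (opR l f) = 0) :
    bet l (g - opS l g) (opR l (opR l f) - opR l f) = 0 := by
  have h1 : bet l (opR l g) (opR l (opR l f)) = bet l g (opR l f) := bet_R _ _ _
  have h2 : bet l (opR l g) (opR l f) = bet l g f := bet_R _ _ _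
  have h3 : bet l g f = - bet l (opR l g) f := by
    rw [← bet_S, hS, ← hg, map_neg]
  have h4 : bet l (opR l g) f = bet l g (opR l (opR l f)) := by
    rw [← bet_R, ← bet_R, opR3]
  have h5 : bet l g f + bet l g (opR l f) + bet l g (opR l (opR l f)) = 0 := by
    rw [← map_add, ← map_add, hR, map_zero]
  rw [← hg, LinearMap.map_sub₂, map_sub, map_sub, h1, h2]
  linear_combination (-2) * h5 + 3 * h3 - 3 * h4

noncomputable def toE (l : ℕ) : V l →ₗ[ℂ] E l where
  toFun w := fun z => (w (0, z.1, z.2), w (1, z.1, z.2), w (2, z.1, z.2))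
  map_add' a b := by funext z; simp
  map_smul' c a := by funext z; simp

lemma toE_apply (l : ℕ) (w : V l) (u v : ZMod l) :
    toE l w (u, v) = (w (0, u, v), w (1, u, v), w (2, u, v)) := rfl

lemma toE_surj (l : ℕ) [NeZero l] (e : E l) : ∃ w, toE l w = e := by
  refine ⟨Finsupp.equivFunOnFinite.symm
    (fun p => if p.1 = 0 then (e p.2).1 else if p.1 = 1 then (e p.2).2.1 else (e p.2).2.2), ?_⟩
  funext ⟨u, v⟩
  simp [toE_apply]

lemma toE_X2 (l : ℕ) (u v : ZMod l) : toE l (X2 l u v) = Pi.single (u, v) (1, 0, 0) := by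
  funext ⟨x, y⟩
  rw [toE_apply]
  simp only [X2, Finsupp.single_apply, Pi.single_apply, Prod.mk.injEq]
  by_cases h : x = u ∧ y = v
  · obtain ⟨rfl, rfl⟩ := h; simp
  · have h' : ¬ (u = x ∧ v = y) := fun k => h ⟨k.1.symm, k.2.symm⟩
    simp [h, h']

lemma toE_XY (l : ℕ) (u v : ZMod l) : toE l (XY l u v) = Pi.single (u, v) (0, 1, 0) := by
  funext ⟨x, y⟩
  rw [toE_apply]
  simp only [XY, Finsupp.single_apply, Pi.single_apply, Prod.mk.injEq]
  by_cases h : x = u ∧ y = v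
  · obtain ⟨rfl, rfl⟩ := h; simp
  · have h' : ¬ (u = x ∧ v = y) := fun k => h ⟨k.1.symm, k.2.symm⟩
    simp [h, h']

lemma toE_Y2 (l : ℕ) (u v : ZMod l) : toE l (Y2 l u v) = Pi.single (u, v) (0, 0, 1) := by
  funext ⟨x, y⟩
  rw [toE_apply]
  simp only [Y2, Finsupp.single_apply, Pi.single_apply, Prod.mk.injEq]
  by_cases h : x = u ∧ y = v
  · obtain ⟨rfl, rfl⟩ := h; simp
  · have h' : ¬ (u = x ∧ v = y) := fun k => h ⟨k.1.symm, k.2.symm⟩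
    simp [h, h']

lemma lin_expand (l : ℕ) [NeZero l] {N : Type*} [AddCommGroup N] [Module ℂ N]
    (L : V l →ₗ[ℂ] N) (w : V l) :
    L w = ∑ z : ZMod l × ZMod l, ((toE l w z).1 • L (X2 l z.1 z.2) +
      (toE l w z).2.1 • L (XY l z.1 z.2) + (toE l w z).2.2 • L (Y2 l z.1 z.2)) := by
  have h : w = ∑ p : Sym l, w p • Finsupp.single p (1 : ℂ) := by
    conv_lhs => rw [← Finsupp.univ_sum_single w]
    simp
  conv_lhs => rw [h]
  rw [map_sum, Fintype.sum_prod_type, Fin.sum_univ_three]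
  simp only [map_smul, Finset.sum_add_distrib]
  rfl

lemma rel_x2 (l : ℕ) [NeZero l] (u v : ZMod l) : x2 l u v + y2 l v (-u) = 0 := by
  by_cases h : copr l u v
  · exact (Submodule.Quotient.mk_eq_zero _).2 (Submodule.subset_span
      (Or.inr ⟨u, v, h, Or.inl rfl⟩))
  · have h1 : x2 l u v = 0 := (Submodule.Quotient.mk_eq_zero _).2 (Submodule.subset_span
      (Or.inl ⟨u, v, h, Or.inl rfl⟩))
    have h2 : y2 l v (-u) = 0 := (Submodule.Quotient.mk_eq_zero _).2 (Submodule.subset_span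
      (Or.inl ⟨v, -u, by rwa [copr_S'], Or.inr (Or.inr rfl)⟩))
    rw [h1, h2, add_zero]

lemma rel_y2 (l : ℕ) [NeZero l] (u v : ZMod l) : y2 l u v + x2 l v (-u) = 0 := by
  by_cases h : copr l u v
  · exact (Submodule.Quotient.mk_eq_zero _).2 (Submodule.subset_span
      (Or.inr ⟨u, v, h, Or.inr (Or.inr (Or.inl rfl))⟩))
  · have h1 : y2 l u v = 0 := (Submodule.Quotient.mk_eq_zero _).2 (Submodule.subset_span
      (Or.inl ⟨u, v, h, Or.inr (Or.inr rfl)⟩))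
    have h2 : x2 l v (-u) = 0 := (Submodule.Quotient.mk_eq_zero _).2 (Submodule.subset_span
      (Or.inl ⟨v, -u, by rwa [copr_S'], Or.inl rfl⟩))
    rw [h1, h2, add_zero]

lemma rel_xy (l : ℕ) [NeZero l] (u v : ZMod l) : xy l u v - xy l v (-u) = 0 := by
  by_cases h : copr l u v
  · exact (Submodule.Quotient.mk_eq_zero _).2 (Submodule.subset_span
      (Or.inr ⟨u, v, h, Or.inr (Or.inl rfl)⟩))
  · have h1 : xy l u v = 0 := (Submodule.Quotient.mk_eq_zero _).2 (Submodule.subset_span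
      (Or.inl ⟨u, v, h, Or.inr (Or.inl rfl)⟩))
    have h2 : xy l v (-u) = 0 := (Submodule.Quotient.mk_eq_zero _).2 (Submodule.subset_span
      (Or.inl ⟨v, -u, by rwa [copr_S'], Or.inr (Or.inl rfl)⟩))
    rw [h1, h2, sub_zero]

lemma non_copr (l : ℕ) (u v : ZMod l) (h : ¬ copr l u v) :
    x2 l u v = 0 ∧ xy l u v = 0 ∧ y2 l u v = 0 :=
  ⟨(Submodule.Quotient.mk_eq_zero _).2 (Submodule.subset_span
      (Or.inl ⟨u, v, h, Or.inl rfl⟩)),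
   (Submodule.Quotient.mk_eq_zero _).2 (Submodule.subset_span
      (Or.inl ⟨u, v, h, Or.inr (Or.inl rfl)⟩)),
   (Submodule.Quotient.mk_eq_zero _).2 (Submodule.subset_span
      (Or.inl ⟨u, v, h, Or.inr (Or.inr rfl)⟩))⟩

lemma rel_R (l : ℕ) [NeZero l] (u v : ZMod l) :
    xy l v (-u - v) - xy l (-u - v) u + y2 l (-u - v) u + x2 l u v - xy l u v = 0 := by
  by_cases h : copr l u v
  · exact (Submodule.Quotient.mk_eq_zero _).2 (Submodule.subset_span
      (Or.inr ⟨u, v, h, Or.inr (Or.inr (Or.inr rfl))⟩))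
  · have h0 := non_copr l u v h
    have h1 := non_copr l v (-u - v) (by rwa [copr_R'])
    have h2 := non_copr l (-u - v) u (by rwa [copr_R])
    simp [h0, h1, h2]

/-- The vector representing a functional. -/
noncomputable def vec (l : ℕ) (φ : Module.Dual ℂ (M l)) : E l :=
  fun z => (φ (y2 l z.1 z.2), -2 * φ (xy l z.1 z.2), φ (x2 l z.1 z.2))

lemma vec_apply (l : ℕ) (φ : Module.Dual ℂ (M l)) (u v : ZMod l) :
    vec l φ (u, v) = (φ (y2 l u v), -2 * φ (xy l u v), φ (x2 l u v)) := rfl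

lemma phi_mk (l : ℕ) [NeZero l] (φ : Module.Dual ℂ (M l)) (w : V l) :
    φ ((Rel l).mkQ w) = bet l (vec l φ) (toE l w) := by
  rw [← LinearMap.comp_apply, lin_expand, bet_apply]
  refine Finset.sum_congr rfl fun z _ => ?_
  change _ • φ (x2 l z.1 z.2) + _ • φ (xy l z.1 z.2) + _ • φ (y2 l z.1 z.2) = _
  simp only [vec, smul_eq_mul]
  ring

lemma vec_P (l : ℕ) (φ : Module.Dual ℂ (M l)) : opP l (vec l φ) = vec l φ := by
  funext ⟨u, v⟩
  rw [opP_apply]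
  split_ifs with h
  · rfl
  · simp [vec_apply, non_copr l u v h]; rfl

lemma vec_S (l : ℕ) [NeZero l] (φ : Module.Dual ℂ (M l)) : opS l (vec l φ) = - vec l φ := by
  funext ⟨u, v⟩
  have h1 := congrArg φ (rel_x2 l (-v) u)
  have h2 := congrArg φ (rel_xy l (-v) u)
  have h3 := congrArg φ (rel_y2 l (-v) u)
  simp only [map_add, map_sub, map_zero, neg_neg] at h1 h2 h3
  rw [opS_apply, Pi.neg_apply]
  simp only [vec_apply]
  ext <;> simp
  · linear_combination h1
  · linear_combination h2
  · linear_combination h3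

lemma vec_R (l : ℕ) [NeZero l] (φ : Module.Dual ℂ (M l)) :
    vec l φ + opR l (vec l φ) + opR l (opR l (vec l φ)) = 0 := by
  funext ⟨u, v⟩
  have h1 := congrArg φ (rel_R l u v)
  have h2 := congrArg φ (rel_R l v (-u - v))
  have h3 := congrArg φ (rel_R l (-u - v) u)
  have e1 : -v - (-u - v) = u := by ring
  have e2 : -(-u - v) - u = v := by ring
  simp only [map_add, map_sub, map_zero, e1, e2] at h1 h2 h3
  simp only [Pi.add_apply, opR2, opR_apply, vec_apply]
  ext <;> simp
  · linear_combination h2 + h3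
  · linear_combination (-2) * h3
  · linear_combination h1 + h3

lemma mk_S (l : ℕ) [NeZero l] (w w' : V l) (h : toE l w' = opS l (toE l w)) :
    (Rel l).mkQ w' = - (Rel l).mkQ w := by
  rw [lin_expand, lin_expand l (Rel l).mkQ w, ← Finset.sum_neg_distrib, h,
    ← Equiv.sum_comp (eqS l).symm]
  refine Finset.sum_congr rfl fun z _ => ?_
  obtain ⟨u, v⟩ := z
  simp only [eqS, Equiv.coe_fn_symm_mk, opS_apply, neg_neg]
  change _ • x2 l v (-u) + _ • xy l v (-u) + _ • y2 l v (-u) =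
    -(_ • x2 l u v + _ • xy l u v + _ • y2 l u v)
  have h1 := rel_x2 l u v
  have h2 := rel_xy l u v
  have h3 := rel_y2 l u v
  rw [eq_neg_of_add_eq_zero_left h1, sub_eq_zero.1 h2, eq_neg_of_add_eq_zero_left h3]
  module

lemma PD_eq (l : ℕ) [NeZero l] (φ : Module.Dual ℂ (M l)) (w : V l)
    (hw : toE l w = opR l (opR l (vec l φ)) - opR l (vec l φ)) :
    PD l φ = (24 : ℂ)⁻¹ • (Rel l).mkQ w := by
  obtain ⟨w1, h1⟩ := toE_surj l (opR l (opR l (vec l φ)))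
  obtain ⟨w2, h2⟩ := toE_surj l (opR l (vec l φ))
  obtain ⟨w3, h3⟩ := toE_surj l (opS l (opR l (vec l φ)))
  have hm : (Rel l).mkQ w = (Rel l).mkQ (w1 + w3) := by
    have e1 : w = w1 - w2 := by
      have : toE l w = toE l (w1 - w2) := by rw [map_sub, h1, h2, hw]
      ext ⟨i, u, v⟩
      have t := congrFun this (u, v)
      simp only [toE_apply, Prod.mk.injEq] at t
      fin_cases i
      · exact t.1
      · exact t.2.1
      · exact t.2.2
    rw [e1, map_sub, map_add, mk_S l w2 w3 (by rw [h3, h2]), sub_eq_add_neg]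
  rw [hm, PD, lin_expand, Fintype.sum_prod_type]
  congr 1
  refine Finset.sum_congr rfl fun u _ => Finset.sum_congr rfl fun v _ => ?_
  have hS := vec_S l φ
  -- the value of the vector at the two points
  have k1 : toE l w1 (u, v) = opR l (opR l (opS l (opS l (vec l φ)))) (u, v) := by
    rw [h1, hS, map_neg, hS, neg_neg]
  have k3 : toE l w3 (u, v) = - opS l (opR l (opS l (vec l φ))) (u, v) := by
    rw [h3, hS, map_neg, map_neg, Pi.neg_apply, neg_neg]
  rw [map_add (toE l), Pi.add_apply, k1, k3]
  have e1 : -(-u - v) = u + v := by ring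
  have e2 : -(- -v - u) = u - v := by ring
  have e3 : - -v - u = v - u := by ring
  have e4 : -(u + v - u) = -v := by ring
  simp only [opS_apply, opR_apply, vec_apply, e1, e3, e4, neg_neg]
  change _ = _ • x2 l u v + _ • xy l u v + _ • y2 l u v
  simp only [pcl, map_add, map_sub, map_smul, smul_eq_mul, Prod.fst_add, Prod.snd_add,
    Prod.fst_neg, Prod.snd_neg]
  module

lemma rel_decomp (l : ℕ) [NeZero l] (w : V l) (hw : w ∈ Rel l) :
    ∃ a b : E l, opS l a = a ∧ opR l b = b ∧ opP l a = a ∧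
      opP l (toE l w + opS l (opS l (toE l w))) = a + b := by
  have genS : ∀ m : E l, ∀ e, e = m + opS l m → ∃ a b : E l, opS l a = a ∧ opR l b = b ∧
      opP l a = a ∧ opP l (e + opS l (opS l e)) = a + b := by
    rintro m e rfl
    have hpp : ∀ e : E l, opP l (opP l e) = opP l e := by
      intro e; funext ⟨x, y⟩; simp only [opP_apply]; split_ifs <;> rfl
    refine ⟨opP l (m + opS l m + opS l (opS l (m + opS l m))), 0, ?_, map_zero _, hpp _, ?_⟩
    · rw [← opPS]; congr 1
      simp only [map_add, opS4]; abel
    · rw [add_zero]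
  have genR : ∀ m : E l, ∀ e, e = m + opR l m + opR l (opR l m) →
      ∃ a b : E l, opS l a = a ∧ opR l b = b ∧
      opP l a = a ∧ opP l (e + opS l (opS l e)) = a + b := by
    rintro m e rfl
    refine ⟨0, _, map_zero _, ?_, map_zero _, (zero_add _).symm⟩
    rw [← opPR]; congr 1
    simp only [map_add, opSSR, opR3]; abel
  have genN : ∀ u v c, ¬ copr l u v → ∃ a b : E l, opS l a = a ∧ opR l b = b ∧
      opP l a = a ∧ opP l (Pi.single (u, v) c + opS l (opS l (Pi.single (u, v) c))) = a + b := by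
    intro u v c h
    refine ⟨0, 0, map_zero _, map_zero _, map_zero _, ?_⟩
    rw [map_add, opPS, opPS, opP_single l u v c h]; simp
  induction hw using Submodule.span_induction with
  | mem x hx =>
    rcases hx with ⟨u, v, h, rfl | rfl | rfl⟩ | ⟨u, v, -, rfl | rfl | rfl | rfl⟩
    · rw [toE_X2]; exact genN _ _ _ h
    · rw [toE_XY]; exact genN _ _ _ h
    · rw [toE_Y2]; exact genN _ _ _ h
    · refine genS (Pi.single (u, v) (1, 0, 0)) _ ?_
      rw [map_add, toE_X2, toE_Y2, opS_single]; simp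
    · refine genS (Pi.single (u, v) (0, 1, 0)) _ ?_
      rw [map_sub, toE_XY, toE_XY, opS_single, sub_eq_add_neg, ← Pi.single_neg]; simp
    · refine genS (Pi.single (u, v) (0, 0, 1)) _ ?_
      rw [map_add, toE_X2, toE_Y2, opS_single]; simp
    · refine genR (Pi.single (u, v) (1, -1, 0)) _ ?_
      have e1 : -v - (-u - v) = u := by ring
      simp only [map_add, map_sub, toE_X2, toE_Y2, toE_XY, opR_single, e1]
      have t1 : (Pi.single (u, v) ((1 : ℂ), (-1 : ℂ), (0 : ℂ)) : E l) =
        Pi.single (u, v) (1, 0, 0) - Pi.single (u, v) (0, 1, 0) := by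
        rw [← Pi.single_sub]; simp
      have t2 : (Pi.single (-u - v, u) ((0 : ℂ), (-1 : ℂ), (1 : ℂ)) : E l) =
        Pi.single (-u - v, u) (0, 0, 1) - Pi.single (-u - v, u) (0, 1, 0) := by
        rw [← Pi.single_sub]; simp
      rw [t1]
      norm_num
      rw [t2]
      abel
  | zero => exact ⟨0, 0, by simp, by simp, by simp, by simp⟩
  | add x y _ _ hx hy =>
    obtain ⟨a, b, h1, h2, h3, h4⟩ := hx
    obtain ⟨a', b', h1', h2', h3', h4'⟩ := hy
    refine ⟨a + a', b + b', by rw [map_add, h1, h1'], by rw [map_add, h2, h2'],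
      by rw [map_add, h3, h3'], ?_⟩
    rw [add_add_add_comm, ← h4, ← h4', ← map_add]
    congr 1
    simp only [map_add]; abel
  | smul c x _ hx =>
    obtain ⟨a, b, h1, h2, h3, h4⟩ := hx
    refine ⟨c • a, c • b, by rw [map_smul, h1], by rw [map_smul, h2],
      by rw [map_smul, h3], ?_⟩
    rw [← smul_add, ← h4, ← map_smul]
    congr 1
    simp only [map_smul, smul_add]

lemma exists_g (l : ℕ) [NeZero l] (f : E l) (w : V l) (hP : opP l f = f) (hS : opS l f = -f)
    (hR : f + opR l f + opR l (opR l f) = 0)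
    (hw : toE l w = opR l (opR l f) - opR l f) (h0 : w ∈ Rel l) :
    ∃ g : E l, opP l g = g ∧ opS l (opS l g) = g ∧ opR l g = opS l g ∧ f = g - opS l g := by
  obtain ⟨a, b, ha, hb, hPa, hab⟩ := rel_decomp l w h0
  have hSS : opS l (opS l f) = f := by rw [hS, map_neg, hS, neg_neg]
  have e1 : opP l (toE l w + opS l (opS l (toE l w))) =
      (2 : ℂ) • (opR l (opR l f) - opR l f) := by
    rw [hw]
    simp only [map_add, map_sub, opPS, opPR, hP, ← opSSR, hSS]
    module
  rw [e1] at hab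
  have h1 := congrArg (opR l) hab
  have h2 := congrArg (opR l) h1
  simp only [map_add, map_sub, map_smul, hb, opR3] at h1 h2
  have hR' : opR l (opR l f) = - f - opR l f := by
    rw [← sub_eq_zero, ← hR]; abel
  have key : f = (-(6 : ℂ)⁻¹) • (opR l (opR l a) - opR l a) := by
    have : opR l (opR l a) - opR l a = (-6 : ℂ) • f := by
      have : opR l (opR l a) - opR l a =
        (opR l (opR l a) + b) - (opR l a + b) := by abel
      rw [this, ← h1, ← h2, hR']
      module
    rw [this, smul_smul]; norm_num
  set a' := (-(6 : ℂ)⁻¹) • a with ha'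
  have k : f = opR l (opR l a') - opR l a' := by
    rw [key, ha']; simp only [map_smul]; module
  have hSa : opS l a' = a' := by rw [ha', map_smul, ha]
  have hPa' : opP l a' = a' := by rw [ha', map_smul, hPa]
  refine ⟨(2 : ℂ)⁻¹ • (a' + f), ?_, ?_, ?_, ?_⟩
  · rw [map_smul, map_add, hPa', hP]
  · simp only [map_smul, map_add, hSa, hSS]
  · rw [map_smul, map_smul, map_add, map_add, hSa, hS]
    congr 1
    have : opR l f = a' - opR l (opR l a') := by rw [k, map_sub, opR3]
    rw [this]
    conv_rhs => rw [k]
    abel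
  · rw [map_smul, map_add, hSa, hS]; module

/-- Divisibility behind the cusp classes. -/
lemma castg_eq (l : ℕ) [NeZero l] (a u u' : ZMod l) (h : castg l a u = castg l a u') :
    ∃ k : ℕ, u = u' + k * a := by
  have h1 : castg l a (u - u') = 0 := by rw [map_sub, h, sub_self]
  rw [castg, ZMod.castHom_apply, ZMod.cast_eq_val, ZMod.natCast_eq_zero_iff] at h1
  obtain ⟨c, hc⟩ := h1
  have h2 := congrArg (Int.cast : ℤ → ZMod l) (Nat.gcd_eq_gcd_ab (ZMod.val a) l)
  push_cast at h2
  simp only [ZMod.natCast_val, ZMod.cast_id', id, CharP.cast_eq_zero, zero_mul, add_zero] at h2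
  have h3 : u - u' = ((u - u').val : ZMod l) := by simp
  rw [hc] at h3
  push_cast at h3
  rw [h2] at h3
  refine ⟨(((Nat.gcdA a.val l : ℤ) : ZMod l) * c).val, ?_⟩
  rw [ZMod.natCast_val, ZMod.cast_id', id]
  linear_combination h3

lemma unit_of_copr (l : ℕ) [NeZero l] (a u : ZMod l) (h : copr l u a) :
    IsUnit (castg l a u) := by
  obtain ⟨s, t, hst⟩ := (copr_iff l u a).1 h
  have h1 := congrArg (castg l a) hst
  have h2 : castg l a a = 0 := by
    rw [castg, ZMod.castHom_apply, ZMod.cast_eq_val, ZMod.natCast_eq_zero_iff]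
    exact Nat.gcd_dvd_left _ _
  rw [map_add, map_mul, map_mul, h2, mul_zero, add_zero, map_one] at h1
  exact IsUnit.of_mul_eq_one_right _ h1

lemma T_inv (l : ℕ) [NeZero l] (g : E l) (hg : opR l g = opS l g) :
    (∀ u v, (g (u, v)).2 = 0) ∧
    ∀ a u u', castg l a u = castg l a u' → (g (u, a)).1 = (g (u', a)).1 := by
  have hT : ∀ u v, (g (u, v)).2.2 = (g (u + v, v)).2.2 ∧
      (g (u, v)).2.1 + 2 * (g (u, v)).2.2 = (g (u + v, v)).2.1 ∧
      (g (u, v)).1 + (g (u, v)).2.1 + (g (u, v)).2.2 = (g (u + v, v)).1 := by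
    intro u v
    have h := congrFun hg (v, -(u + v))
    have e1 : -v - -(u + v) = u := by ring
    simp only [opR_apply, opS_apply, e1, neg_neg, Prod.mk.injEq] at h
    exact ⟨h.1, by linear_combination - h.2.1, h.2.2⟩
  have hl : (l : ℂ) ≠ 0 := Nat.cast_ne_zero.2 (NeZero.ne l)
  have hr : ∀ u v (k : ℕ), (g (u + k * v, v)).2.2 = (g (u, v)).2.2 := by
    intro u v k
    induction k with
    | zero => simp
    | succ k ih =>
      rw [← ih, (hT (u + k * v) v).1]; push_cast; congr 4; ring
  have hq : ∀ u v (k : ℕ), (g (u + k * v, v)).2.1 = (g (u, v)).2.1 + 2 * k * (g (u, v)).2.2 := by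
    intro u v k
    induction k with
    | zero => simp
    | succ k ih =>
      have e : u + ((k + 1 : ℕ) : ZMod l) * v = (u + k * v) + v := by push_cast; ring
      rw [e, ← (hT (u + k * v) v).2.1, ih, hr]; push_cast; ring
  have hr0 : ∀ u v, (g (u, v)).2.2 = 0 := by
    intro u v
    have := hq u v l
    simp only [CharP.cast_eq_zero, zero_mul, add_zero, left_eq_add, mul_eq_zero] at this
    simpa [hl] using this
  have hp : ∀ u v (k : ℕ), (g (u + k * v, v)).1 = (g (u, v)).1 + k * (g (u, v)).2.1 := by
    intro u v k
    induction k with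
    | zero => simp
    | succ k ih =>
      have e : u + ((k + 1 : ℕ) : ZMod l) * v = (u + k * v) + v := by push_cast; ring
      rw [e, ← (hT (u + k * v) v).2.2, ih, hr0, hq, hr0]; push_cast; ring
  have hq0 : ∀ u v, (g (u, v)).2.1 = 0 := by
    intro u v
    have := hp u v l
    simp only [CharP.cast_eq_zero, zero_mul, add_zero, left_eq_add, mul_eq_zero] at this
    simpa [hl] using this
  refine ⟨fun u v => Prod.ext (hq0 u v) (hr0 u v), fun a u u' h => ?_⟩
  obtain ⟨k, rfl⟩ := castg_eq l a u u' h
  rw [hp, hq0]; simp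

/-- The vector of a cusp. -/
noncomputable def gab (l : ℕ) (a : ZMod l) (b : ZMod (Nat.gcd (ZMod.val a) l)) : E l :=
  fun z => (if copr l z.1 z.2 then
    (if z.2 = a ∧ castg l a z.1 = -b then (1 : ℂ) else 0) +
    (if z.2 = -a ∧ castg l a z.1 = b then (1 : ℂ) else 0) else 0, 0, 0)

lemma gab_inv (l : ℕ) [NeZero l] (a : ZMod l) (b : ZMod (Nat.gcd (ZMod.val a) l)) :
    opR l (gab l a b) = opS l (gab l a b) := by
  have h2 : castg l a a = 0 := by
    rw [castg, ZMod.castHom_apply, ZMod.cast_eq_val, ZMod.natCast_eq_zero_iff]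
    exact Nat.gcd_dvd_left _ _
  funext ⟨u, v⟩
  rw [opR_apply, opS_apply]
  simp only [gab, copr_R, copr_S]
  have i1 : (u = a ∧ castg l a (-u - v) = -b) ↔ (u = a ∧ castg l a (-v) = -b) := by
    refine and_congr_right ?_
    rintro rfl
    rw [map_sub, map_neg, h2, map_neg, neg_zero, zero_sub]
  have i2 : (u = -a ∧ castg l a (-u - v) = b) ↔ (u = -a ∧ castg l a (-v) = b) := by
    refine and_congr_right ?_
    rintro rfl
    rw [neg_neg, map_sub, h2, map_neg, zero_sub]
  simp only [i1, i2]
  ext <;> simp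

lemma psi_eq (l : ℕ) [NeZero l] (a : ZMod l) (b : ZMod (Nat.gcd (ZMod.val a) l)) (w : V l) :
    psiV l a b w = - bet l (gab l a b - opS l (gab l a b)) (toE l w) := by
  rw [lin_expand, bet_apply, ← Finset.sum_neg_distrib]
  refine Finset.sum_congr rfl fun z _ => ?_
  obtain ⟨u, v⟩ := z
  have hc : castg l a (-v) = -b ↔ castg l a v = b := by rw [map_neg, neg_inj]
  have hc' : castg l a (-v) = b ↔ castg l a v = -b := by rw [map_neg, neg_eq_iff_eq_neg]
  simp only [Pi.sub_apply, opS_apply, gab, copr_S, hc, hc', psiV, X2, XY, Y2]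
  by_cases h : copr l u v
  · simp [h]; ring
  · simp [h]

lemma gab_nonunit (l : ℕ) [NeZero l] (a : ZMod l) (b : ZMod (Nat.gcd (ZMod.val a) l))
    (hb : ¬ IsUnit b) : gab l a b = 0 := by
  funext ⟨u, v⟩
  simp only [gab]
  by_cases h : copr l u v
  · have n1 : ¬ (v = a ∧ castg l a u = -b) := by
      rintro ⟨rfl, h2⟩
      have := unit_of_copr l v u h
      rw [h2, IsUnit.neg_iff] at this
      exact hb this
    have n2 : ¬ (v = -a ∧ castg l a u = b) := by
      rintro ⟨rfl, h2⟩
      have hc : copr l u a := by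
        obtain ⟨s, t, hst⟩ := (copr_iff l _ _).1 h
        exact (copr_iff l _ _).2 ⟨s, -t, by rw [← hst]; ring⟩
      have := unit_of_copr l a u hc
      rw [h2] at this
      exact hb this
    simp [n1, n2]
  · simp [h]

lemma g_comb (l : ℕ) [NeZero l] (g : E l) (hP : opP l g = g) (hSS : opS l (opS l g) = g)
    (hg : opR l g = opS l g) :
    ∃ c : (a : ZMod l) → ZMod (Nat.gcd (ZMod.val a) l) → ℂ,
      ∃ s : (a : ZMod l) → Finset (ZMod (Nat.gcd (ZMod.val a) l)),
      g = ∑ a, ∑ b ∈ s a, c a b • gab l a b := by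
  classical
  obtain ⟨h2, h1⟩ := T_inv l g hg
  have hsurj : ∀ a : ZMod l, ∀ b, ∃ u, castg l a u = b := fun a b =>
    ZMod.castHom_surjective (Nat.gcd_dvd_right (ZMod.val a) l) b
  choose lift hlift using hsurj
  refine ⟨fun a b => (2 : ℂ)⁻¹ * (g (-lift a b, a)).1,
    fun a => Finset.univ.image (castg l a), ?_⟩
  have hneg : ∀ u v, g (-u, -v) = g (u, v) := fun u v => by
    rw [← opSS l g, hSS]
  funext ⟨u, v⟩
  by_cases h : copr l u v
  · rw [Finset.sum_apply]
    simp only [Finset.sum_apply, Pi.smul_apply]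
    refine Prod.ext ?_ ?_
    · simp only [Prod.fst_sum, Prod.smul_fst, gab, h, if_true, smul_eq_mul, mul_add,
        Finset.sum_add_distrib, mul_ite, mul_one, mul_zero]
      have s1 : ∀ a, (∑ b ∈ Finset.univ.image (castg l a),
          if v = a ∧ castg l a u = -b then (2 : ℂ)⁻¹ * (g (-lift a b, a)).1 else 0) =
          if v = a then (2 : ℂ)⁻¹ * (g (u, v)).1 else 0 := by
        intro a
        split_ifs with hva
        · subst hva
          rw [Finset.sum_eq_single (castg l v (-u))]
          · rw [if_pos ⟨rfl, by rw [map_neg, neg_neg]⟩]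
            congr 1
            apply h1
            rw [map_neg, hlift, map_neg, neg_neg]
          · intro b _ hb
            rw [if_neg]
            rintro ⟨-, h3⟩
            apply hb; rw [map_neg, h3, neg_neg]
          · intro hn; exact absurd (Finset.mem_image_of_mem _ (Finset.mem_univ _)) hn
        · refine Finset.sum_eq_zero fun b _ => ?_
          rw [if_neg]; exact fun k => hva k.1
      have s2 : ∀ a, (∑ b ∈ Finset.univ.image (castg l a),
          if v = -a ∧ castg l a u = b then (2 : ℂ)⁻¹ * (g (-lift a b, a)).1 else 0) =
          if -v = a then (2 : ℂ)⁻¹ * (g (u, v)).1 else 0 := by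
        intro a
        split_ifs with hva
        · subst hva
          rw [Finset.sum_eq_single (castg l (-v) u)]
          · rw [if_pos ⟨by rw [neg_neg], rfl⟩, ← hneg u v]
            congr 1
            apply h1
            rw [map_neg, hlift, map_neg]
          · intro b _ hb
            rw [if_neg]
            rintro ⟨-, h3⟩
            exact hb h3.symm
          · intro hn; exact absurd (Finset.mem_image_of_mem _ (Finset.mem_univ _)) hn
        · refine Finset.sum_eq_zero fun b _ => ?_
          rw [if_neg]; rintro ⟨k, -⟩; apply hva; rw [k, neg_neg]
      rw [Finset.sum_congr rfl fun a _ => s1 a, Finset.sum_congr rfl fun a _ => s2 a]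
      simp only [Finset.sum_ite_eq, Finset.mem_univ, if_true]
      ring
    · rw [h2]
      simp [Prod.snd_sum, gab]; rfl
  · have : g (u, v) = 0 := by rw [← hP, opP_apply, if_neg h]
    rw [this, Finset.sum_apply]
    symm
    refine Finset.sum_eq_zero fun a _ => ?_
    rw [Finset.sum_apply]
    refine Finset.sum_eq_zero fun b _ => ?_
    simp [gab, h]

lemma PD_mem (l : ℕ) [NeZero l] (φ : Module.Dual ℂ (M l)) : PD l φ ∈ S l := by
  obtain ⟨w, hw⟩ := toE_surj l (opR l (opR l (vec l φ)) - opR l (vec l φ))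
  rw [PD_eq l φ w hw]
  refine Submodule.smul_mem _ _ (Submodule.mem_map_of_mem ?_)
  simp only [Submodule.mem_iInf, LinearMap.mem_ker]
  intro a b _
  rw [psi_eq, hw, bet_cusp l _ _ (gab_inv l a b) (vec_S l φ) (vec_R l φ), neg_zero]

lemma PD_skew (l : ℕ) [NeZero l] (φ φ' : Module.Dual ℂ (M l)) :
    φ (PD l φ') = - φ' (PD l φ) := by
  obtain ⟨w, hw⟩ := toE_surj l (opR l (opR l (vec l φ)) - opR l (vec l φ))
  obtain ⟨w', hw'⟩ := toE_surj l (opR l (opR l (vec l φ')) - opR l (vec l φ'))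
  rw [PD_eq l φ w hw, PD_eq l φ' w' hw', map_smul, map_smul, phi_mk, phi_mk, hw, hw',
    bet_skew, smul_neg]

lemma PD_ker (l : ℕ) [NeZero l] (φ : Module.Dual ℂ (M l)) (h : PD l φ = 0) :
    ∀ m ∈ S l, φ m = 0 := by
  obtain ⟨w, hw⟩ := toE_surj l (opR l (opR l (vec l φ)) - opR l (vec l φ))
  rw [PD_eq l φ w hw] at h
  have h0 : (Rel l).mkQ w = 0 := by
    rcases smul_eq_zero.1 h with h | h
    · norm_num at h
    · exact h
  obtain ⟨g, hP, hSS, hg, hf⟩ := exists_g l (vec l φ) w (vec_P l φ) (vec_S l φ) (vec_R l φ) hw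
    ((Submodule.Quotient.mk_eq_zero _).1 h0)
  obtain ⟨c, s, hc⟩ := g_comb l g hP hSS hg
  rintro m ⟨w', hw', rfl⟩
  simp only [SetLike.mem_coe, Submodule.mem_iInf, LinearMap.mem_ker] at hw'
  rw [phi_mk, hf]
  have : g - opS l g = ∑ a, ∑ b ∈ s a, c a b • (gab l a b - opS l (gab l a b)) := by
    conv_lhs => rw [hc]
    simp only [map_sum, map_smul, smul_sub, Finset.sum_sub_distrib]
  rw [this]
  simp only [map_sum, map_smul, LinearMap.sum_apply, LinearMap.smul_apply]
  refine Finset.sum_eq_zero fun a _ => Finset.sum_eq_zero fun b _ => ?_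
  by_cases hb : IsUnit b
  · have := hw' a b hb
    rw [psi_eq, neg_eq_zero] at this
    rw [this, smul_zero]
  · rw [gab_nonunit l a b hb]; simp

lemma PD_add (l : ℕ) [NeZero l] (φ φ' : Module.Dual ℂ (M l)) :
    PD l (φ + φ') = PD l φ + PD l φ' := by
  rw [← sub_eq_zero]
  refine (Module.forall_dual_apply_eq_zero_iff ℂ _).1 fun χ => ?_
  rw [map_sub, map_add, PD_skew, PD_skew l χ φ, PD_skew l χ φ', LinearMap.add_apply]; ring

lemma PD_smul (l : ℕ) [NeZero l] (c : ℂ) (φ : Module.Dual ℂ (M l)) :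
    PD l (c • φ) = c • PD l φ := by
  rw [← sub_eq_zero]
  refine (Module.forall_dual_apply_eq_zero_iff ℂ _).1 fun χ => ?_
  rw [map_sub, map_smul, PD_skew, PD_skew l χ φ, LinearMap.smul_apply, smul_neg, sub_self]

end MW

open MW in
theorem stmt8 (l : ℕ) (hl : 1 < l) [NeZero l] :
    (∀ φ : Module.Dual ℂ (M l), PD l φ = 0 ↔ ∀ m ∈ S l, φ m = 0) ∧
    Set.range (PD l) = (S l : Set (M l)) := by
  refine ⟨fun φ => ⟨PD_ker l φ, fun h => ?_⟩, ?_⟩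
  · refine (Module.forall_dual_apply_eq_zero_iff ℂ _).1 fun χ => ?_
    rw [PD_skew, h _ (PD_mem l χ), neg_zero]
  · let L : Module.Dual ℂ (M l) →ₗ[ℂ] M l :=
      { toFun := PD l, map_add' := PD_add l, map_smul' := PD_smul l }
    have hL : Set.range (PD l) = (LinearMap.range L : Set (M l)) := rfl
    rw [hL]
    congr 1
    apply le_antisymm
    · rintro _ ⟨φ, rfl⟩
      exact PD_mem l φ
    · intro m hm
      by_contra hn
      obtain ⟨χ, h1, h2⟩ := Submodule.exists_le_ker_of_notMem hn
      apply h1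
      refine PD_ker l χ ?_ m hm
      refine (Module.forall_dual_apply_eq_zero_iff ℂ _).1 fun φ => ?_
      rw [PD_skew]
      have : χ (L φ) = 0 := h2 ⟨φ, rfl⟩
      change - χ (L φ) = 0
      rw [this, neg_zero]
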